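/- (Convergence case of the S-arithmetic Khintchine–Groshev theorem with congruence conditions) Assume d = m + n ≥ 2. Let ψ = (ψ_p)_{p∈S} be a collection of approximating functions, fix N ∈ ℕ_S and a pair (v_m, v_n) ∈ ℤ_S^m × ℤ_S^n. If ∫_{ℚ_S^n} ∏_{p∈S} ψ_p(‖y‖_p^n) dy < ∞, then for almost every A = (A_p)_{p∈S} ∈ Mat_{m,n}(ℚ_S) (with respect to Haar measure) there are only finitely many pairs (p⃗, q⃗) ∈ ℤ_S^m × ℤ_S^n with (p⃗, q⃗) ≡ (v_m, v_n) mod N satisfying ‖A_p q⃗ + p⃗‖_p^m ≤ ψ_p(‖q⃗‖_p^n) for all p ∈ S. -/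

import Mathlib

open MeasureTheory Matrix

noncomputable section

/-- `z` belongs to the ring of `S`-integers `ℤ_S = ℤ[1/P]`,
where `P` is the product of the finite primes in `S`. -/
def IsZS (P : ℕ) (z : ℚ) : Prop := ∃ (a : ℤ) (k : ℕ), z = (a : ℚ) / (P : ℚ) ^ k

/-- A collection of approximating functions `ψ = (ψ_p)_{p ∈ S}`:
each `ψ_p : ℝ_{>0} → ℝ_{>0}` is non-increasing and `≡ 1` on `(0,1]`
(we extend by `1` on `t ≤ 1`); moreover for each finite place `p`,
`ψ_p` is constant on `{p^{kn}, …, p^{kn+n-1}}` for every `k ∈ ℤ` and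
takes values in `p^{mℤ}` on `p^ℤ`. -/
structure ApproxFamily (m n s : ℕ) (p : Fin s → ℕ) : Type where
  psiR : ℝ → ℝ
  psiP : Fin s → ℝ → ℝ
  posR : ∀ t, 0 < psiR t
  antiR : ∀ ⦃t₁ t₂ : ℝ⦄, 0 < t₁ → t₁ ≤ t₂ → psiR t₂ ≤ psiR t₁
  oneR : ∀ ⦃t : ℝ⦄, t ≤ 1 → psiR t = 1
  posP : ∀ i t, 0 < psiP i t
  antiP : ∀ i ⦃t₁ t₂ : ℝ⦄, 0 < t₁ → t₁ ≤ t₂ → psiP i t₂ ≤ psiP i t₁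
  oneP : ∀ i ⦃t : ℝ⦄, t ≤ 1 → psiP i t = 1
  constP : ∀ i (k : ℤ) (j : ℕ), j < n →
    psiP i ((p i : ℝ) ^ (k * n + j : ℤ)) = psiP i ((p i : ℝ) ^ (k * n : ℤ))
  valsP : ∀ i (k : ℤ), ∃ l : ℤ, psiP i ((p i : ℝ) ^ k) = (p i : ℝ) ^ (m * l : ℤ)

/-- The real components of the diagonal embedding of a rational vector. -/
def ratR {k : ℕ} (q : Fin k → ℚ) : Fin k → ℝ := fun j => (q j : ℝ)

/-- The `p i`-adic components of the diagonal embedding of a rational vector. -/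
def ratP {s : ℕ} (p : Fin s → ℕ) [∀ i, Fact (p i).Prime] {k : ℕ} (i : Fin s)
    (q : Fin k → ℚ) : Fin k → ℚ_[p i] := fun j => (q j : ℚ_[p i])

/-- The region `E_f(T) ⊆ ℚ_S^m × ℚ_S^n` cut out by `‖x‖_p^m ≤ f_p(‖y‖_p^n)` and
`‖y‖_p^n ≤ T_p` for all `p ∈ S` (product coordinates). -/
def Eprod (m n : ℕ) {s : ℕ} (p : Fin s → ℕ) [∀ i, Fact (p i).Prime]
    (fR : ℝ → ℝ) (fP : Fin s → ℝ → ℝ) (TR : ℝ) (TP : Fin s → ℝ) :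
    Set (((Fin m → ℝ) × ∀ i, Fin m → ℚ_[p i]) × ((Fin n → ℝ) × ∀ i, Fin n → ℚ_[p i])) :=
  {xy | ‖xy.1.1‖ ^ m ≤ fR (‖xy.2.1‖ ^ n) ∧ ‖xy.2.1‖ ^ n ≤ TR ∧
      ∀ i, ‖xy.1.2 i‖ ^ m ≤ fP i (‖xy.2.2 i‖ ^ n) ∧ ‖xy.2.2 i‖ ^ n ≤ TP i}

/-- The region `E_f(T) ⊆ ℚ_S^{m+n}`, where the first `m` coordinates play the role of
`x` and the last `n` coordinates the role of `y`. -/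
def Efull (m n : ℕ) {s : ℕ} (p : Fin s → ℕ) [∀ i, Fact (p i).Prime]
    (fR : ℝ → ℝ) (fP : Fin s → ℝ → ℝ) (TR : ℝ) (TP : Fin s → ℝ) :
    Set ((Fin (m + n) → ℝ) × ∀ i, Fin (m + n) → ℚ_[p i]) :=
  {v | ‖fun a : Fin m => v.1 (Fin.castAdd n a)‖ ^ m
        ≤ fR (‖fun b : Fin n => v.1 (Fin.natAdd m b)‖ ^ n) ∧
      ‖fun b : Fin n => v.1 (Fin.natAdd m b)‖ ^ n ≤ TR ∧
      ∀ i, ‖fun a : Fin m => v.2 i (Fin.castAdd n a)‖ ^ m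
            ≤ fP i (‖fun b : Fin n => v.2 i (Fin.natAdd m b)‖ ^ n) ∧
          ‖fun b : Fin n => v.2 i (Fin.natAdd m b)‖ ^ n ≤ TP i}

/-- The operator norm of a real matrix acting on sup-normed spaces. -/
def opNorm {k l : ℕ} (M : Matrix (Fin k) (Fin l) ℝ) : ℝ :=
  ‖LinearMap.toContinuousLinearMap M.mulVecLin‖

/-- An element of the group `𝐇 = ∏_{p ∈ S} H_p` of block lower-triangular matrices,
given by its blocks at each place. -/
structure HElem (m n : ℕ) (s : ℕ) (p : Fin s → ℕ) [∀ i, Fact (p i).Prime] : Type where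
  aR : Matrix (Fin m) (Fin m) ℝ
  bR : Matrix (Fin n) (Fin m) ℝ
  cR : Matrix (Fin n) (Fin n) ℝ
  aP : ∀ i, Matrix (Fin m) (Fin m) ℚ_[p i]
  bP : ∀ i, Matrix (Fin n) (Fin m) ℚ_[p i]
  cP : ∀ i, Matrix (Fin n) (Fin n) ℚ_[p i]

/-- The action of an element of `𝐇` on `ℚ_S^m × ℚ_S^n`:
`h·(x, y) = (α x, β x + γ y)` at each place. -/
def HElem.act {m n s : ℕ} {p : Fin s → ℕ} [∀ i, Fact (p i).Prime] (h : HElem m n s p)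
    (xy : ((Fin m → ℝ) × ∀ i, Fin m → ℚ_[p i]) × ((Fin n → ℝ) × ∀ i, Fin n → ℚ_[p i])) :
    ((Fin m → ℝ) × ∀ i, Fin m → ℚ_[p i]) × ((Fin n → ℝ) × ∀ i, Fin n → ℚ_[p i]) :=
  ((h.aR.mulVec xy.1.1, fun i => (h.aP i).mulVec (xy.1.2 i)),
   (h.bR.mulVec xy.1.1 + h.cR.mulVec xy.2.1,
    fun i => (h.bP i).mulVec (xy.1.2 i) + (h.cP i).mulVec (xy.2.2 i)))

/-- Membership in `H̃_{∞,ε}`: operator norm bounds on the blocks. -/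
def inHtilde (m n : ℕ) (ε : ℝ) (α : Matrix (Fin m) (Fin m) ℝ) (β : Matrix (Fin n) (Fin m) ℝ)
    (γ : Matrix (Fin n) (Fin n) ℝ) : Prop :=
  opNorm α ^ m ≤ 1 + ε ∧ opNorm γ ^ n ≤ 1 + ε / 2 ∧ opNorm β ≤ ε / (4 * n)

/-- `h ∈ (H̃_{∞,ε} ∩ H̃_{∞,ε}⁻¹) × ∏_{p ∈ S_f} H_p(ℤ_p)`. -/
def HElem.isAdmissible {m n s : ℕ} {p : Fin s → ℕ} [∀ i, Fact (p i).Prime]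
    (h : HElem m n s p) (ε : ℝ) : Prop :=
  IsUnit h.aR.det ∧ IsUnit h.cR.det ∧
  inHtilde m n ε h.aR h.bR h.cR ∧
  inHtilde m n ε h.aR⁻¹ (-(h.cR⁻¹ * h.bR * h.aR⁻¹)) h.cR⁻¹ ∧
  ∀ i, ((∀ a b, ‖h.aP i a b‖ ≤ 1) ∧ ‖(h.aP i).det‖ = 1) ∧
      ((∀ a b, ‖h.cP i a b‖ ≤ 1) ∧ ‖(h.cP i).det‖ = 1) ∧
      (∀ a b, ‖h.bP i a b‖ ≤ 1)

end

/-!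
`ℤ_S` is a discrete subgroup of `ℚ_S` with fundamental domain `[0,1) × ∏ ℤ_p`, so the set of `A`
with finitely many solutions is invariant under `Mat_{m,n}(ℤ_S)` and it is enough to treat `A` in a
fundamental cube `F`. For fixed `q ≠ 0` the map `A ↦ A q` is onto and carries integral matrices to
integral vectors; hence summing over `u ∈ ℤ_S^m` the measure of the `A ∈ F` with `A q + u` in a box
gives a translation-invariant function of the box, that is, a multiple of its volume. For the box
`‖x‖_p^m ≤ ψ_p(‖q‖_p^n)` the volume is at most a constant times `∏ ψ_p(‖q‖_p^n)`. Monotonicity of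
the `ψ_p` bounds the sum of these products over `q` by the integral, and the Borel–Cantelli lemma
leaves finitely many solutions with `q ≠ 0`. For `q = 0` there are finitely many because `ℤ_S^m` is
discrete.
-/

noncomputable section

section Tiles

variable {L X : Type*} [AddCommGroup L] [AddCommGroup X] {j : L →+ X} {D : Set X}

/-- `D` is a strict fundamental domain for the translations of `X` by the elements `j l`; the
uniqueness of `l`, rather than of `j l`, makes `j` injective. -/
def IsTile (j : L →+ X) (D : Set X) : Prop := ∀ x, ∃! l, x + j l ∈ D

theorem IsTile.injective (hD : IsTile j D) : Function.Injective j := by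
  intro l l' h
  obtain ⟨k, hk, -⟩ := hD (-j l)
  have hshift : ∀ l₁, j l₁ = j l → l₁ - l + k = k := fun l₁ h₁ =>
    (hD (-j l)).unique (by simpa [h₁] using hk) hk
  have := hshift l' h.symm
  rw [add_eq_right, sub_eq_zero] at this
  exact this.symm

theorem IsTile.pi (hD : IsTile j D) (ι : Type*) :
    IsTile (j.compLeft ι) (Set.univ.pi fun _ => D) := by
  intro x
  choose l hl hl_unique using fun a => hD (x a)
  exact ⟨l, fun a _ => hl a, fun l' hl' => funext fun a => hl_unique a _ (hl' a trivial)⟩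

variable [MeasurableSpace X]

theorem IsTile.isAddFundamentalDomain (hD : IsTile j D) (hDm : MeasurableSet D)
    (μ : Measure X) : IsAddFundamentalDomain j.range D μ := by
  refine .mk' hDm.nullMeasurableSet fun x => ?_
  obtain ⟨l, hl, hl_unique⟩ := hD x
  refine ⟨⟨j l, l, rfl⟩, by simpa [AddSubgroup.vadd_def, add_comm] using hl, ?_⟩
  rintro ⟨_, l', rfl⟩ hl'
  have hl'' : x + j l' ∈ D := by simpa [AddSubgroup.vadd_def, add_comm] using hl'
  exact Subtype.ext (congrArg j (hl_unique l' hl''))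

variable [MeasurableAdd X] {μ : Measure X} [μ.IsAddLeftInvariant]

open scoped Pointwise in
theorem IsTile.setLIntegral_add_left [Countable L] (hD : IsTile j D) (hDm : MeasurableSet D)
    {f : X → ENNReal} (hf : ∀ x l, f (x + j l) = f x) (b : X) :
    ∫⁻ x in D, f (b + x) ∂μ = ∫⁻ x in D, f x ∂μ := by
  have hcount : Countable j.range := j.rangeRestrict_surjective.countable
  have hfund := hD.isAddFundamentalDomain hDm μ
  have hper : ∀ (g : j.range) x, f (g +ᵥ x) = f x := by
    rintro ⟨_, l, rfl⟩ x
    simpa only [AddSubgroup.vadd_def, vadd_eq_add, add_comm] using hf x l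
  calc ∫⁻ x in D, f (b + x) ∂μ = ∫⁻ x in b +ᵥ D, f x ∂μ :=
        (measurePreserving_vadd b μ).setLIntegral_comp_emb (measurableEmbedding_const_vadd b) f D
    _ = ∫⁻ x in D, f x ∂μ := (hfund.setLIntegral_eq (hfund.vadd_of_comm b) f hper).symm

theorem IsTile.ae_of_forall_periodic [Countable L] (hD : IsTile j D) (hDm : MeasurableSet D)
    {P : X → Prop} (hP : ∀ x l, P (x + j l) → P x) (h : ∀ᵐ x ∂μ.restrict D, P x) :
    ∀ᵐ x ∂μ, P x := by
  rw [ae_restrict_iff' hDm] at h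
  have htrans : ∀ᵐ x ∂μ, ∀ l, x + j l ∈ D → P (x + j l) := ae_all_iff.2 fun l =>
    (measurePreserving_add_right μ (j l)).quasiMeasurePreserving.ae h
  filter_upwards [htrans] with x hx
  obtain ⟨l, hl, -⟩ := hD x
  exact hP x l (hx l hl)

theorem IsTile.lintegral_eq_tsum [Countable L] (hD : IsTile j D) (hDm : MeasurableSet D)
    (f : X → ENNReal) : ∫⁻ x, f x ∂μ = ∑' l, ∫⁻ x in D, f (j l + x) ∂μ := by
  have hcount : Countable j.range := j.rangeRestrict_surjective.countable
  rw [(hD.isAddFundamentalDomain hDm μ).lintegral_eq_tsum'']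
  exact ((AddMonoidHom.ofInjective hD.injective).toEquiv.tsum_eq
    fun g : j.range => ∫⁻ x in D, f (g +ᵥ x) ∂μ).symm

theorem IsTile.tsum_mul_measure_le [Countable L] (hD : IsTile j D) (hDm : MeasurableSet D)
    {T : Type*} [Fintype T] (c : T → X) {w : X → ENNReal}
    (hw : ∀ l, ∃ t, ∀ x ∈ D, w (j l) ≤ w (c t + (j l + x))) :
    (∑' l, w (j l)) * μ D ≤ Fintype.card T * ∫⁻ x, w x ∂μ := by
  have hl : ∀ l, w (j l) * μ D ≤ ∑ t, ∫⁻ x in D, w (c t + (j l + x)) ∂μ := by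
    intro l
    obtain ⟨t, ht⟩ := hw l
    calc w (j l) * μ D = ∫⁻ _ in D, w (j l) ∂μ := (setLIntegral_const D _).symm
      _ ≤ ∫⁻ x in D, w (c t + (j l + x)) ∂μ := setLIntegral_mono' hDm ht
      _ ≤ ∑ t, ∫⁻ x in D, w (c t + (j l + x)) ∂μ :=
        Finset.single_le_sum_of_canonicallyOrdered
          (f := fun t => ∫⁻ x in D, w (c t + (j l + x)) ∂μ) (Finset.mem_univ t)
  calc (∑' l, w (j l)) * μ D = ∑' l, w (j l) * μ D := ENNReal.tsum_mul_right.symm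
    _ ≤ ∑' l, ∑ t, ∫⁻ x in D, w (c t + (j l + x)) ∂μ := ENNReal.tsum_le_tsum hl
    _ = ∑ t, ∑' l, ∫⁻ x in D, w (c t + (j l + x)) ∂μ :=
      Summable.tsum_finsetSum fun _ _ => ENNReal.summable
    _ = ∑ t, ∫⁻ x, w (c t + x) ∂μ :=
      Finset.sum_congr rfl fun t _ => (hD.lintegral_eq_tsum hDm fun x => w (c t + x)).symm
    _ = Fintype.card T * ∫⁻ x, w x ∂μ := by
      simp only [lintegral_add_left_eq_self, Finset.sum_const, Finset.card_univ, nsmul_eq_mul]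

end Tiles

section LatticeAverage

variable {L X : Type*} [AddCommGroup L] [AddCommGroup X] {j : L →+ X} {D : Set X}

/-- The number of `l : L` such that the translate `x + j l` lies in `S`. -/
def latticeCount (j : L →+ X) (S : Set X) (x : X) : ENNReal := ∑' l, S.indicator 1 (x + j l)

theorem latticeCount_add_map (S : Set X) (x : X) (l : L) :
    latticeCount j S (x + j l) = latticeCount j S x := by
  simp only [latticeCount, add_assoc, ← map_add]
  exact (Equiv.addLeft l).tsum_eq fun k => S.indicator (1 : X → ENNReal) (x + j k)

theorem latticeCount_preimage_add_left (S : Set X) (b x : X) :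
    latticeCount j ((b + ·) ⁻¹' S) x = latticeCount j S (b + x) :=
  tsum_congr fun l => by rw [add_assoc]; rfl

theorem IsTile.latticeCount_eq_one (hD : IsTile j D) (x : X) : latticeCount j D x = 1 := by
  obtain ⟨l, hl, hl_unique⟩ := hD x
  rw [latticeCount, tsum_eq_single l fun k hk =>
    Set.indicator_of_notMem (fun h => hk (hl_unique k h)) _]
  exact Set.indicator_of_mem hl _

variable {G : Type*} [AddCommGroup G] [MeasurableSpace G] [MeasurableSpace X] [MeasurableAdd X]
  {κ : Measure G} {F : Set G} {φ : G →+ X} {S : Set X}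

/-- The measure `S ↦ ∑ₗ κ {A ∈ F | φ A + j l ∈ S}`, the mean over `A ∈ F` of the number of points
of the affine lattice `φ A + j L` in `S`. -/
def latticeAverage (κ : Measure G) (F : Set G) (φ : G →+ X) (j : L →+ X) : Measure X :=
  .sum fun l => (κ.restrict F).map fun A => φ A + j l

theorem latticeAverage_apply (hφ : Measurable φ) (hS : MeasurableSet S) :
    latticeAverage κ F φ j S = ∑' l, κ (F ∩ {A | φ A + j l ∈ S}) := by
  rw [latticeAverage, Measure.sum_apply _ hS]
  refine tsum_congr fun l => ?_
  have hl : Measurable fun A => φ A + j l := hφ.add_const _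
  rw [Measure.map_apply hl hS, Measure.restrict_apply (hl hS), Set.inter_comm]
  rfl

theorem latticeAverage_eq_lintegral_latticeCount [Countable L] (hφ : Measurable φ)
    (hS : MeasurableSet S) :
    latticeAverage κ F φ j S = ∫⁻ A in F, latticeCount j S (φ A) ∂κ := by
  have hl : ∀ l, Measurable fun A => φ A + j l := fun l => hφ.add_const _
  have hind : ∀ l, Measurable fun A => S.indicator (1 : X → ENNReal) (φ A + j l) := fun l =>
    (measurable_one.indicator hS).comp (hl l)
  simp only [latticeCount]
  rw [latticeAverage, Measure.sum_apply _ hS, lintegral_tsum fun l => (hind l).aemeasurable]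
  refine tsum_congr fun l => ?_
  rw [Measure.map_apply (hl l) hS, ← lintegral_indicator_one (hl l hS)]
  rfl

theorem IsTile.latticeAverage_eq [Countable L] (hD : IsTile j D) (hDm : MeasurableSet D)
    (hφ : Measurable φ) : latticeAverage κ F φ j D = κ F := by
  simp only [latticeAverage_eq_lintegral_latticeCount hφ hDm, hD.latticeCount_eq_one,
    setLIntegral_one]

variable {M : Type*} [AddCommGroup M] {i : M →+ G} [MeasurableAdd G] [κ.IsAddLeftInvariant]

theorem IsTile.isAddLeftInvariant_latticeAverage [Countable L] [Countable M] (hF : IsTile i F)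
    (hFm : MeasurableSet F) (hφ : Measurable φ) (hφs : Function.Surjective φ)
    (hφi : ∀ c, φ (i c) ∈ j.range) : (latticeAverage κ F φ j).IsAddLeftInvariant := by
  refine ⟨fun x => Measure.ext fun S hS => ?_⟩
  obtain ⟨B, rfl⟩ := hφs x
  have hper : ∀ A c, latticeCount j S (φ (A + i c)) = latticeCount j S (φ A) := by
    intro A c
    obtain ⟨l, hl⟩ := hφi c
    rw [map_add, ← hl, latticeCount_add_map]
  have hBS := measurable_const_add (φ B) hS
  rw [Measure.map_apply (measurable_const_add _) hS,
    latticeAverage_eq_lintegral_latticeCount hφ hBS,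
    latticeAverage_eq_lintegral_latticeCount hφ hS]
  simp only [latticeCount_preimage_add_left, ← map_add]
  exact hF.setLIntegral_add_left (f := fun A => latticeCount j S (φ A)) hFm hper B

-- Siegel's mean value formula for affine lattices: `latticeAverage` is translation invariant, hence
-- a multiple of the Haar measure `ξ`, and its value at `D` determines the factor.
theorem IsTile.tsum_measure_mul_eq [Countable L] [Countable M] [TopologicalSpace X]
    [IsTopologicalAddGroup X] [LocallyCompactSpace X] [SecondCountableTopology X] [BorelSpace X]
    {ξ : Measure X} [ξ.IsAddHaarMeasure] (hD : IsTile j D) (hDm : MeasurableSet D)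
    (hDi : (interior D).Nonempty) (hF : IsTile i F) (hFm : MeasurableSet F) (hFκ : κ F ≠ ⊤)
    (hφ : Measurable φ) (hφs : Function.Surjective φ) (hφi : ∀ c, φ (i c) ∈ j.range)
    {E : Set X} (hE : MeasurableSet E) :
    (∑' l, κ (F ∩ {A | φ A + j l ∈ E})) * ξ D = κ F * ξ E := by
  have hinv : (latticeAverage κ F φ j).IsAddLeftInvariant :=
    hF.isAddLeftInvariant_latticeAverage hFm hφ hφs hφi
  have hfin : IsFiniteMeasureOnCompacts (latticeAverage κ F φ j) :=
    ⟨fun K hK => measure_lt_top_of_isCompact_of_isAddLeftInvariant' hDi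
      (hD.latticeAverage_eq hDm hφ ▸ hFκ) hK⟩
  have hsmul := Measure.isAddLeftInvariant_eq_smul (latticeAverage κ F φ j) ξ
  have hc := hD.latticeAverage_eq (κ := κ) (F := F) hDm hφ
  rw [← latticeAverage_apply hφ hE, ← hc, hsmul]
  simp only [Measure.smul_apply, ENNReal.smul_def, smul_eq_mul]
  ring

end LatticeAverage

section SIntegers

theorem IsZS.intCast (P : ℕ) (a : ℤ) : IsZS P a := ⟨a, 0, by simp⟩

theorem IsZS.of_dvd {P Q : ℕ} (hQ : Q ≠ 0) (hPQ : P ∣ Q) {z : ℚ} (hz : IsZS P z) : IsZS Q z := by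
  obtain ⟨a, k, rfl⟩ := hz
  obtain ⟨R, rfl⟩ := hPQ
  obtain ⟨-, hR⟩ := mul_ne_zero_iff.1 hQ
  refine ⟨a * R ^ k, k, ?_⟩
  have : (R : ℚ) ≠ 0 := Nat.cast_ne_zero.2 hR
  push_cast
  rw [mul_pow, mul_div_mul_right _ _ (pow_ne_zero k this)]

theorem IsZS.norm_le_one {q : ℕ} [Fact q.Prime] {P : ℕ} (hqP : q.Coprime P) {z : ℚ}
    (hz : IsZS P z) : ‖(z : ℚ_[q])‖ ≤ 1 := by
  obtain ⟨a, k, rfl⟩ := hz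
  have hP : ‖(P : ℚ_[q])‖ = 1 := (Padic.norm_natCast_eq_one_iff).2 hqP
  push_cast
  rw [norm_div, norm_pow, hP, one_pow, div_one]
  exact Padic.norm_int_le_one a

theorem exists_isZS_norm_sub_le_one {q : ℕ} [Fact q.Prime] (x : ℚ_[q]) :
    ∃ z, IsZS q z ∧ ‖x - (z : ℚ_[q])‖ ≤ 1 := by
  have hq : (q : ℚ_[q]) ≠ 0 := Nat.cast_ne_zero.2 (Fact.out : q.Prime).ne_zero
  obtain ⟨k, hk⟩ := pow_unbounded_of_one_lt ‖x‖ (Nat.one_lt_cast.2 (Fact.out : q.Prime).one_lt)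
  have hqk : (0 : ℝ) < q ^ k := (norm_nonneg x).trans_lt hk
  have hnorm : ‖(q : ℚ_[q]) ^ k‖ = ((q : ℝ) ^ k)⁻¹ := by rw [norm_pow, Padic.norm_p, inv_pow]
  have hint : ‖(q : ℚ_[q]) ^ k * x‖ ≤ 1 := by
    rw [norm_mul, hnorm, inv_mul_le_one₀ hqk]
    exact hk.le
  let y : ℤ_[q] := ⟨_, hint⟩
  have happr := (PadicInt.norm_le_pow_iff_mem_span_pow _ k).2 (PadicInt.appr_spec k y)
  rw [PadicInt.norm_def, _root_.zpow_neg, zpow_natCast, ← hnorm] at happr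
  have hxy : x = y / (q : ℚ_[q]) ^ k := (mul_div_cancel_left₀ x (pow_ne_zero k hq)).symm
  refine ⟨_, ⟨y.appr k, k, rfl⟩, ?_⟩
  push_cast at happr ⊢
  rw [hxy, ← sub_div, norm_div]
  exact div_le_one_of_le₀ happr (norm_nonneg _)

/-- The ring `ℤ[1/P]`. -/
def sInt (P : ℕ) [NeZero P] : Subring ℚ where
  carrier := {z | IsZS P z}
  zero_mem' := ⟨0, 0, by simp⟩
  one_mem' := ⟨1, 0, by simp⟩
  neg_mem' := by
    rintro _ ⟨a, k, rfl⟩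
    exact ⟨-a, k, by push_cast; ring⟩
  add_mem' := by
    rintro _ _ ⟨a, k, rfl⟩ ⟨b, l, rfl⟩
    have : (P : ℚ) ≠ 0 := Nat.cast_ne_zero.2 (NeZero.ne P)
    exact ⟨a * P ^ l + b * P ^ k, k + l, by push_cast; field_simp; ring⟩
  mul_mem' := by
    rintro _ _ ⟨a, k, rfl⟩ ⟨b, l, rfl⟩
    exact ⟨a * b, k + l, by push_cast; rw [pow_add, div_mul_div_comm]⟩

variable {S : Type*} [Fintype S] {p : S → ℕ} [hprime : ∀ i, Fact (p i).Prime]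

instance neZero_prod_primes : NeZero (∏ i, p i) :=
  ⟨Finset.prod_ne_zero_iff.2 fun i _ => (hprime i).out.ne_zero⟩

theorem IsZS.exists_eq_intCast {z : ℚ} (hz : IsZS (∏ i, p i) z)
    (h : ∀ i, ‖(z : ℚ_[p i])‖ ≤ 1) : ∃ k : ℤ, z = k := by
  obtain ⟨a, k, rfl⟩ := hz
  set z : ℚ := a / (∏ i, p i : ℕ) ^ k with hz
  have hden : z.den ∣ (∏ i, p i) ^ k := by
    have := Rat.den_dvd a ((∏ i, p i : ℕ) ^ k : ℤ)
    rw [Rat.divInt_eq_div] at this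
    push_cast at this
    rw [hz]
    push_cast
    exact_mod_cast this
  have hcop : Nat.Coprime z.den ((∏ i, p i) ^ k) := by
    refine .pow_right _ (Nat.Coprime.prod_right fun i _ => ?_)
    rw [Nat.coprime_comm, (hprime i).out.coprime_iff_not_dvd, ← Rat.padicValuation_le_one_iff]
    exact (Padic.norm_rat_le_one_iff_padicValuation_le_one (p i)).1 (h i)
  exact ⟨z.num, ((Rat.den_eq_one_iff z).1 (hcop.eq_one_of_dvd hden)).symm⟩

theorem IsZS.eq_zero {z : ℚ} (hz : IsZS (∏ i, p i) z) (hR : |z| < 1)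
    (h : ∀ i, ‖(z : ℚ_[p i])‖ ≤ 1) : z = 0 := by
  obtain ⟨k, rfl⟩ := hz.exists_eq_intCast h
  exact_mod_cast Int.abs_lt_one_iff.1 (by exact_mod_cast hR)

theorem exists_isZS_forall_norm_add_le_one (hp : Function.Injective p) (x : ∀ i, ℚ_[p i]) :
    ∃ z, IsZS (∏ i, p i) z ∧ ∀ i, ‖x i + (z : ℚ_[p i])‖ ≤ 1 := by
  classical
  choose w hw hxw using fun i => exists_isZS_norm_sub_le_one (x i)
  refine ⟨-∑ i, w i, (sInt _).neg_mem ((sInt (∏ i, p i)).sum_mem fun i _ =>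
    (hw i).of_dvd (NeZero.ne _) (Finset.dvd_prod_of_mem p (Finset.mem_univ i))), fun i => ?_⟩
  have hothers : ‖∑ k ∈ Finset.univ.erase i, (w k : ℚ_[p i])‖ ≤ 1 :=
    IsUltrametricDist.norm_sum_le_of_forall_le_of_nonneg zero_le_one fun k hk =>
      (hw k).norm_le_one ((Nat.coprime_primes (hprime i).out (hprime k).out).2
        fun h => Finset.ne_of_mem_erase hk (hp h.symm))
  have hsplit : x i + ((-∑ k, w k : ℚ) : ℚ_[p i])
      = (x i - w i) - ∑ k ∈ Finset.univ.erase i, (w k : ℚ_[p i]) := by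
    rw [← Finset.add_sum_erase _ _ (Finset.mem_univ i)]
    push_cast
    ring
  rw [hsplit, sub_eq_add_neg]
  exact (Padic.nonarchimedean _ _).trans (max_le (hxw i) ((norm_neg _).trans_le hothers))

end SIntegers

section SAdic

variable {S : Type*} {p : S → ℕ} [∀ i, Fact (p i).Prime] {ι : Type*} {m n : ℕ}

/-- The ring `ℚ_S`, for `S` consisting of the real place and the primes `p i`. -/
abbrev QS (p : S → ℕ) [∀ i, Fact (p i).Prime] : Type _ := ℝ × ∀ i, ℚ_[p i]

/-- The unit cube `[0,1) × ∏ ℤ_p` of `ℚ_S`. -/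
def unitBox (p : S → ℕ) [∀ i, Fact (p i).Prime] : Set (QS p) :=
  Set.Ico 0 1 ×ˢ Set.univ.pi fun _ => Metric.closedBall 0 1

theorem measurableSet_unitBox [Countable S] [∀ i, MeasurableSpace ℚ_[p i]]
    [∀ i, BorelSpace ℚ_[p i]] : MeasurableSet (unitBox p) :=
  measurableSet_Ico.prod (.univ_pi fun _ => measurableSet_closedBall)

theorem interior_unitBox_nonempty [Finite S] : (interior (unitBox p)).Nonempty := by
  refine ⟨(1 / 2, 0), mem_interior_iff_mem_nhds.2 (prod_mem_nhds (Ico_mem_nhds ?_ ?_)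
    (set_pi_mem_nhds Set.finite_univ fun i _ => Metric.closedBall_mem_nhds 0 one_pos))⟩ <;> norm_num

theorem isBounded_unitBox [Finite S] : Bornology.IsBounded (unitBox p) :=
  (Metric.isBounded_Ico 0 1).prod (.pi fun _ => Metric.isBounded_closedBall)

theorem mem_unitBox {x : QS p} : x ∈ unitBox p ↔ (0 ≤ x.1 ∧ x.1 < 1) ∧ ∀ i, ‖x.2 i‖ ≤ 1 := by
  simp only [unitBox, Set.mem_prod, Set.mem_Ico, Set.mem_univ_pi, mem_closedBall_zero_iff]

/-- The cube `([0,1) × ∏ ℤ_p)^ι`. -/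
def unitCube (p : S → ℕ) [∀ i, Fact (p i).Prime] (ι : Type*) : Set (ι → QS p) :=
  Set.univ.pi fun _ => unitBox p

theorem measurableSet_unitCube [Countable S] [Countable ι] [∀ i, MeasurableSpace ℚ_[p i]]
    [∀ i, BorelSpace ℚ_[p i]] : MeasurableSet (unitCube p ι) :=
  .univ_pi fun _ => measurableSet_unitBox

theorem interior_unitCube_nonempty [Finite S] [Finite ι] : (interior (unitCube p ι)).Nonempty := by
  rw [unitCube, interior_pi_set Set.finite_univ]
  exact Set.univ_pi_nonempty_iff.2 fun _ => interior_unitBox_nonempty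

theorem isBounded_unitCube [Finite S] : Bornology.IsBounded (unitCube p ι) :=
  .pi fun _ => isBounded_unitBox

/-- The cube `([0,1) × ∏ ℤ_p)^{m × n}`. -/
abbrev unitMatCube (p : S → ℕ) [∀ i, Fact (p i).Prime] (m n : ℕ) : Set (Fin m → Fin n → QS p) :=
  Set.univ.pi fun _ => unitCube p (Fin n)

theorem measurableSet_unitMatCube [Countable S] [∀ i, MeasurableSpace ℚ_[p i]]
    [∀ i, BorelSpace ℚ_[p i]] : MeasurableSet (unitMatCube p m n) :=
  .univ_pi fun _ => measurableSet_unitCube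

theorem measure_unitMatCube_ne_top [Finite S] [∀ i, MeasurableSpace ℚ_[p i]]
    (κ : Measure (Fin m → Fin n → QS p)) [κ.IsAddHaarMeasure] : κ (unitMatCube p m n) ≠ ⊤ := by
  have := Fintype.ofFinite S
  exact (Bornology.IsBounded.pi fun _ => isBounded_unitCube).measure_lt_top.ne

variable [Fintype S]

/-- The diagonal embedding of `ℤ_S` in `ℚ_S`. -/
def diagQS (p : S → ℕ) [∀ i, Fact (p i).Prime] : sInt (∏ i, p i) →+* QS p :=
  ((Rat.castHom ℝ).prod (RingHom.pi fun i => Rat.castHom ℚ_[p i])).comp (sInt (∏ i, p i)).subtype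

theorem add_diagQS_mem_unitBox {x : QS p} {z : sInt (∏ i, p i)} :
    x + diagQS p z ∈ unitBox p ↔
      (0 ≤ x.1 + (z : ℚ) ∧ x.1 + (z : ℚ) < 1) ∧ ∀ i, ‖x.2 i + (z : ℚ)‖ ≤ 1 :=
  mem_unitBox

theorem exists_add_diagQS_mem_unitBox (hp : Function.Injective p) (x : QS p) :
    ∃ z, x + diagQS p z ∈ unitBox p := by
  obtain ⟨w, hw, hxw⟩ := exists_isZS_forall_norm_add_le_one hp x.2
  refine ⟨⟨w - ⌊x.1 + w⌋, (sInt _).sub_mem hw (.intCast _ _)⟩,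
    add_diagQS_mem_unitBox.2 ⟨?_, fun i => ?_⟩⟩
  · have hfract : x.1 + ((w - ⌊x.1 + w⌋ : ℚ) : ℝ) = Int.fract (x.1 + w) := by
      rw [Int.fract]
      push_cast
      ring
    rw [hfract]
    exact ⟨Int.fract_nonneg _, Int.fract_lt_one _⟩
  · have hshift : x.2 i + ((w - ⌊x.1 + w⌋ : ℚ) : ℚ_[p i])
        = (x.2 i + w) + ((-⌊x.1 + w⌋ : ℤ) : ℚ_[p i]) := by
      push_cast
      ring
    rw [hshift]
    exact (Padic.nonarchimedean _ _).trans (max_le (hxw i) (Padic.norm_int_le_one _))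

theorem eq_of_add_diagQS_mem_unitBox {x : QS p} {z w : sInt (∏ i, p i)}
    (hz : x + diagQS p z ∈ unitBox p) (hw : x + diagQS p w ∈ unitBox p) : z = w := by
  obtain ⟨hzR, hzP⟩ := add_diagQS_mem_unitBox.1 hz
  obtain ⟨hwR, hwP⟩ := add_diagQS_mem_unitBox.1 hw
  have hzw : (-1 : ℝ) < (z : ℚ) - (w : ℚ) ∧ ((z : ℚ) : ℝ) - (w : ℚ) < 1 :=
    ⟨by linarith, by linarith⟩
  refine Subtype.ext (sub_eq_zero.1 ((z - w).2.eq_zero ?_ fun i => ?_))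
  · exact abs_lt.2 (by exact_mod_cast hzw)
  · have hsub : ((z - w : ℚ) : ℚ_[p i]) = (x.2 i + (z : ℚ)) + -(x.2 i + (w : ℚ)) := by
      push_cast
      ring
    change ‖((z - w : ℚ) : ℚ_[p i])‖ ≤ 1
    rw [hsub]
    exact (Padic.nonarchimedean _ _).trans (max_le (hzP i) ((norm_neg _).trans_le (hwP i)))

theorem isTile_unitBox (hp : Function.Injective p) :
    IsTile (diagQS p).toAddMonoidHom (unitBox p) := fun x =>
  existsUnique_of_exists_of_unique (exists_add_diagQS_mem_unitBox hp x)
    fun _ _ => eq_of_add_diagQS_mem_unitBox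

theorem isUnit_diagQS {z : sInt (∏ i, p i)} (hz : z ≠ 0) : IsUnit (diagQS p z) :=
  (IsUnit.mk0 (z : ℚ) (by simpa using hz)).map
    ((Rat.castHom ℝ).prod (RingHom.pi fun i => Rat.castHom ℚ_[p i]))

end SAdic

section MulVec

variable {R ι κ : Type*} [CommRing R] [Fintype κ]

/-- The map `A ↦ A v`, for a fixed vector `v`. -/
def mulVecHom (ι : Type*) (v : κ → R) : (ι → κ → R) →+ (ι → R) :=
  (AddMonoidHom.mk' (· ⬝ᵥ v) fun x y => add_dotProduct x y v).compLeft ι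

theorem mulVecHom_apply (v : κ → R) (A : ι → κ → R) (a : ι) : mulVecHom ι v A a = A a ⬝ᵥ v := rfl

theorem mulVecHom_surjective {v : κ → R} {c : κ} (hc : IsUnit (v c)) :
    Function.Surjective (mulVecHom ι v) := by
  classical
  obtain ⟨u, hu⟩ := hc
  refine fun x => ⟨fun a => Pi.single c (x a * ↑u⁻¹), funext fun a => ?_⟩
  rw [mulVecHom_apply, single_dotProduct, ← hu, Units.inv_mul_cancel_right]

theorem continuous_mulVecHom [TopologicalSpace R] [IsTopologicalRing R] (v : κ → R) :
    Continuous (mulVecHom ι v) :=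
  continuous_pi fun a => (continuous_apply a).dotProduct continuous_const

theorem mulVecHom_map {R' : Type*} [CommRing R'] (f : R →+* R') (v : κ → R) (C : ι → κ → R) :
    mulVecHom ι (f ∘ v) (fun a b => f (C a b)) = fun a => f (mulVecHom ι v C a) :=
  funext fun a => (RingHom.map_dotProduct f (C a) v).symm

end MulVec

section PadicBall

variable {q : ℕ} [hq : Fact q.Prime]

theorem pairwiseDisjoint_closedBall_natCast (k : ℕ) :
    (Finset.range (q ^ k) : Set ℕ).PairwiseDisjoint
      fun a => Metric.closedBall (a : ℚ_[q]) ((q : ℝ) ^ (-k : ℤ)) := by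
  intro a ha b hb hab
  refine (IsUltrametricDist.closedBall_eq_or_disjoint _ _ _).resolve_left fun heq => hab ?_
  have hmem : (a : ℚ_[q]) ∈ Metric.closedBall (b : ℚ_[q]) ((q : ℝ) ^ (-k : ℤ)) :=
    heq ▸ Metric.mem_closedBall_self (zpow_nonneg (Nat.cast_nonneg q) _)
  rw [mem_closedBall_iff_norm] at hmem
  have hdvd := (Padic.norm_int_le_pow_iff_dvd (a - b) k).1 (by push_cast; exact hmem)
  simp only [Finset.coe_range, Set.mem_Iio] at ha hb
  exact ((Nat.modEq_iff_dvd.2 (by exact_mod_cast hdvd)).eq_of_lt_of_lt hb ha).symm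

variable [MeasurableSpace ℚ_[q]] [BorelSpace ℚ_[q]]
  (η : Measure ℚ_[q]) [η.IsAddLeftInvariant]

theorem pow_mul_measure_closedBall_le (k : ℕ) :
    (q : ENNReal) ^ k * η (Metric.closedBall 0 ((q : ℝ) ^ (-k : ℤ)))
      ≤ η (Metric.closedBall 0 1) := by
  have hq1 : (1 : ℝ) < q := Nat.one_lt_cast.2 hq.out.one_lt
  have hr : (q : ℝ) ^ (-k : ℤ) ≤ 1 := zpow_le_one_of_nonpos₀ hq1.le (by simp)
  set r : ℝ := (q : ℝ) ^ (-k : ℤ)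
  have htrans : ∀ a : ℕ, η (Metric.closedBall (a : ℚ_[q]) r) = η (Metric.closedBall 0 r) := by
    intro a
    rw [← measure_preimage_add η (-a) (Metric.closedBall 0 r), preimage_add_closedBall]
    simp
  calc (q : ENNReal) ^ k * η (Metric.closedBall 0 r)
      = ∑ a ∈ Finset.range (q ^ k), η (Metric.closedBall (a : ℚ_[q]) r) := by
        simp only [htrans, Finset.sum_const, Finset.card_range, nsmul_eq_mul, Nat.cast_pow]
    _ = η (⋃ a ∈ Finset.range (q ^ k), Metric.closedBall (a : ℚ_[q]) r) :=
        (measure_biUnion_finset (pairwiseDisjoint_closedBall_natCast k)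
          fun _ _ => measurableSet_closedBall).symm
    _ ≤ η (Metric.closedBall 0 1) := by
        refine measure_mono (Set.iUnion₂_subset fun a _ => ?_)
        have ha : (a : ℚ_[q]) ∈ Metric.closedBall (0 : ℚ_[q]) 1 :=
          mem_closedBall_zero_iff.2 (by exact_mod_cast Padic.norm_int_le_one a)
        rw [IsUltrametricDist.closedBall_eq_of_mem ha]
        exact Metric.closedBall_subset_closedBall hr

theorem measure_closedBall_le {r : ℝ} (hr : 0 < r) (hr1 : r ≤ 1) :
    η (Metric.closedBall 0 r) ≤ ENNReal.ofReal r * η (Metric.closedBall 0 1) := by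
  have hq1 : (1 : ℝ) < q := Nat.one_lt_cast.2 hq.out.one_lt
  obtain ⟨l, hlr, hrl⟩ := exists_mem_Ico_zpow hr hq1
  obtain ⟨k, rfl⟩ : ∃ k : ℕ, l = -k := by
    refine Int.exists_eq_neg_ofNat (not_lt.1 fun hl => ?_)
    exact (hlr.trans hr1).not_gt (one_lt_zpow₀ hq1 hl)
  have hball : Metric.closedBall (0 : ℚ_[q]) r ⊆ Metric.closedBall 0 ((q : ℝ) ^ (-k : ℤ)) := by
    intro x hx
    rw [mem_closedBall_zero_iff] at hx ⊢
    exact (Padic.norm_le_pow_iff_norm_lt_pow_add_one x _).2 (hx.trans_lt hrl)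
  have hinv : (q : ENNReal) ^ k * ENNReal.ofReal ((q : ℝ) ^ (-k : ℤ)) = 1 := by
    rw [_root_.zpow_neg, zpow_natCast, ← ENNReal.ofReal_natCast,
      ← ENNReal.ofReal_pow (by positivity), ← ENNReal.ofReal_mul (by positivity),
      mul_inv_cancel₀ (by positivity), ENNReal.ofReal_one]
  calc η (Metric.closedBall 0 r) ≤ η (Metric.closedBall 0 ((q : ℝ) ^ (-k : ℤ))) :=
        measure_mono hball
    _ = ENNReal.ofReal ((q : ℝ) ^ (-k : ℤ)) *
          ((q : ENNReal) ^ k * η (Metric.closedBall 0 ((q : ℝ) ^ (-k : ℤ)))) := by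
        rw [← mul_assoc, mul_comm (ENNReal.ofReal _), hinv, one_mul]
    _ ≤ ENNReal.ofReal r * η (Metric.closedBall 0 1) := by
        gcongr
        exact pow_mul_measure_closedBall_le η k

end PadicBall

section Boxes

variable {S : Type*} {p : S → ℕ} [∀ i, Fact (p i).Prime] {ι : Type*}

/-- The real component of a vector over `ℚ_S`. -/
def realComponent (x : ι → QS p) : ι → ℝ := fun a => (x a).1

/-- The `p i`-adic component of a vector over `ℚ_S`. -/
def padicComponent (i : S) (x : ι → QS p) : ι → ℚ_[p i] := fun a => (x a).2 i

/-- The vectors `x` over `ℚ_S` with `‖x‖_∞ ^ m ≤ R` and `‖x‖_p ^ m ≤ r_p` for the finite places. -/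
def powBox (p : S → ℕ) [∀ i, Fact (p i).Prime] (m : ℕ) (R : ℝ) (r : S → ℝ) :
    Set (Fin m → QS p) :=
  {x | ‖realComponent x‖ ^ m ≤ R ∧ ∀ i, ‖padicComponent i x‖ ^ m ≤ r i}

theorem powBox_pow {m : ℕ} (hm : m ≠ 0) {R : ℝ} (hR : 0 ≤ R) {r : S → ℝ} (hr : ∀ i, 0 ≤ r i) :
    powBox p m (R ^ m) (fun i => r i ^ m) = Set.univ.pi fun _ =>
      Metric.closedBall 0 R ×ˢ Set.univ.pi fun i => Metric.closedBall 0 (r i) := by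
  ext x
  simp only [powBox, Set.mem_ofPred_eq, pow_le_pow_iff_left₀ (norm_nonneg _) hR hm,
    pow_le_pow_iff_left₀ (norm_nonneg _) (hr _) hm, pi_norm_le_iff_of_nonneg hR,
    pi_norm_le_iff_of_nonneg (hr _), Set.mem_univ_pi, Set.mem_prod, mem_closedBall_zero_iff,
    realComponent, padicComponent, forall_and]
  exact and_congr_right fun _ => forall_comm

instance secondCountableTopology_padic (q : ℕ) [Fact q.Prime] : SecondCountableTopology ℚ_[q] :=
  secondCountable_of_proper

variable [∀ i, MeasurableSpace ℚ_[p i]] [∀ i, BorelSpace ℚ_[p i]]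

theorem measurableSet_powBox [Countable S] (m : ℕ) (R : ℝ) (r : S → ℝ) :
    MeasurableSet (powBox p m R r) := by
  have hR : Continuous fun x : Fin m → QS p => ‖realComponent x‖ := by
    unfold realComponent; fun_prop
  have hP : ∀ i, Continuous fun x : Fin m → QS p => ‖padicComponent i x‖ := by
    unfold padicComponent; fun_prop
  simp only [powBox, Set.ofPred_and, Set.ofPred_forall]
  exact (measurableSet_le (hR.pow m).measurable measurable_const).inter
    (.iInter fun i => measurableSet_le ((hP i).pow m).measurable measurable_const)

variable [Fintype S] (η : ∀ i, Measure ℚ_[p i]) [∀ i, (η i).IsAddHaarMeasure]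

theorem measure_closedBall_prod_le (R : ℝ) {r : S → ℝ} (hr : ∀ i, 0 < r i) (hr1 : ∀ i, r i ≤ 1) :
    (volume : Measure ℝ).prod (.pi η)
        (Metric.closedBall 0 R ×ˢ Set.univ.pi fun i => Metric.closedBall 0 (r i))
      ≤ 2 * (∏ i, η i (Metric.closedBall 0 1)) * ENNReal.ofReal (R * ∏ i, r i) := by
  have hprod : 0 ≤ ∏ i, r i := Finset.prod_nonneg fun i _ => (hr i).le
  rw [Measure.prod_prod, Measure.pi_pi, Real.volume_closedBall]
  calc ENNReal.ofReal (2 * R) * ∏ i, η i (Metric.closedBall 0 (r i))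
      ≤ ENNReal.ofReal (2 * R) * ∏ i, ENNReal.ofReal (r i) * η i (Metric.closedBall 0 1) := by
        gcongr with i
        exact measure_closedBall_le (η i) (hr i) (hr1 i)
    _ = 2 * (∏ i, η i (Metric.closedBall 0 1)) * ENNReal.ofReal (R * ∏ i, r i) := by
        rw [Finset.prod_mul_distrib, ← ENNReal.ofReal_prod_of_nonneg fun i _ => (hr i).le,
          ENNReal.ofReal_mul zero_le_two, ENNReal.ofReal_mul' hprod, ENNReal.ofReal_ofNat]
        ring

theorem measure_powBox_le {m : ℕ} (hm : m ≠ 0) {R : ℝ} (hR : 0 ≤ R) {r : S → ℝ}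
    (hr : ∀ i, 0 < r i) (hr1 : ∀ i, r i ≤ 1) :
    Measure.pi (fun _ => (volume : Measure ℝ).prod (.pi η)) (powBox p m R r)
      ≤ (2 * ∏ i, η i (Metric.closedBall 0 1)) ^ m * ENNReal.ofReal (R * ∏ i, r i) := by
  obtain ⟨ρ, hρ, rfl⟩ : ∃ ρ : ℝ, 0 ≤ ρ ∧ ρ ^ m = R :=
    ⟨_, Real.rpow_nonneg hR _, Real.rpow_inv_natCast_pow hR hm⟩
  obtain ⟨t, ht⟩ : ∃ t : S → ℝ, (∀ i, 0 < t i) ∧ (fun i => t i ^ m) = r :=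
    ⟨fun i => r i ^ (m⁻¹ : ℝ), fun i => Real.rpow_pos_of_pos (hr i) _,
      funext fun i => Real.rpow_inv_natCast_pow (hr i).le hm⟩
  obtain ⟨ht, rfl⟩ := ht
  have hprod : 0 ≤ ∏ i, t i := Finset.prod_nonneg fun i _ => (ht i).le
  have ht1 : ∀ i, t i ≤ 1 := fun i => (pow_le_one_iff_of_nonneg (ht i).le hm).1 (hr1 i)
  rw [powBox_pow hm hρ fun i => (ht i).le, Measure.pi_pi, Finset.prod_const, Finset.card_univ,
    Fintype.card_fin, Finset.prod_pow, ← mul_pow, ENNReal.ofReal_pow (mul_nonneg hρ hprod),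
    ← mul_pow]
  exact pow_le_pow_left₀ bot_le (measure_closedBall_prod_le η ρ ht ht1) m

end Boxes

section ApproxFunction

/-- A non-increasing positive function which is `1` on `(0, 1]`, extended by `1` to `t ≤ 0`. -/
structure IsApproxFunction (ψ : ℝ → ℝ) : Prop where
  pos : ∀ t, 0 < ψ t
  antitoneOn : AntitoneOn ψ (Set.Ioi 0)
  eq_one : ∀ t ≤ 1, ψ t = 1

variable {ψ : ℝ → ℝ}

theorem IsApproxFunction.le_one (hψ : IsApproxFunction ψ) (t : ℝ) : ψ t ≤ 1 := by
  rcases le_total t 1 with ht | ht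
  · exact (hψ.eq_one t ht).le
  · exact (hψ.antitoneOn (Set.mem_Ioi.2 one_pos) (one_pos.trans_le ht) ht).trans_eq
      (hψ.eq_one 1 le_rfl)

theorem IsApproxFunction.apply_pow_le (hψ : IsApproxFunction ψ) {a b : ℝ} (hb : 0 ≤ b)
    (hba : b ≤ max a 1) (n : ℕ) : ψ (a ^ n) ≤ ψ (b ^ n) := by
  rcases le_total b 1 with hb1 | hb1
  · exact (hψ.le_one _).trans_eq (hψ.eq_one _ (pow_le_one₀ hb hb1)).symm
  · rcases le_max_iff.1 hba with h | h
    · have hb0 : 0 < b := one_pos.trans_le hb1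
      exact hψ.antitoneOn (pow_pos hb0 n) (pow_pos (hb0.trans_le h) n) (pow_le_pow_left₀ hb h n)
    · exact (hψ.le_one _).trans_eq (hψ.eq_one _ (pow_le_one₀ hb h)).symm

theorem ApproxFamily.isApproxFunction_psiR {m n s : ℕ} {p : Fin s → ℕ} (ψ : ApproxFamily m n s p) :
    IsApproxFunction ψ.psiR :=
  ⟨ψ.posR, fun _ h _ _ => ψ.antiR h, fun _ h => ψ.oneR h⟩

theorem ApproxFamily.isApproxFunction_psiP {m n s : ℕ} {p : Fin s → ℕ} (ψ : ApproxFamily m n s p)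
    (i : Fin s) : IsApproxFunction (ψ.psiP i) :=
  ⟨ψ.posP i, fun _ h _ _ => ψ.antiP i h, fun _ h => ψ.oneP i h⟩

end ApproxFunction

section Weight

variable {S : Type*} [Fintype S] {p : S → ℕ} [∀ i, Fact (p i).Prime] {ι : Type*}

/-- The diagonal embedding of `ℤ_S^ι` in `ℚ_S^ι`. -/
abbrev diagVec (p : S → ℕ) [∀ i, Fact (p i).Prime] (ι : Type*) :
    (ι → sInt (∏ i, p i)) →+ (ι → QS p) :=
  (diagQS p).toAddMonoidHom.compLeft ι

theorem isTile_unitCube (hp : Function.Injective p) (ι : Type*) :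
    IsTile (diagVec p ι) (unitCube p ι) := (isTile_unitBox hp).pi ι

variable {n : ℕ} {ψR : ℝ → ℝ} {ψP : S → ℝ → ℝ}

/-- The integrand `∏_p ψ_p(‖y‖_p^n)` on `ℚ_S^n`. -/
def approxWeight (ψR : ℝ → ℝ) (ψP : S → ℝ → ℝ) (y : Fin n → QS p) : ENNReal :=
  ENNReal.ofReal (ψR (‖realComponent y‖ ^ n) * ∏ i, ψP i (‖padicComponent i y‖ ^ n))

theorem approxWeight_le_approxWeight (hψR : IsApproxFunction ψR)
    (hψP : ∀ i, IsApproxFunction (ψP i)) {x y : Fin n → QS p}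
    (hR : ‖realComponent y‖ ≤ max ‖realComponent x‖ 1)
    (hP : ∀ i, ‖padicComponent i y‖ ≤ max ‖padicComponent i x‖ 1) :
    approxWeight ψR ψP x ≤ approxWeight ψR ψP y :=
  ENNReal.ofReal_le_ofReal <| mul_le_mul (hψR.apply_pow_le (norm_nonneg _) hR n)
    (Finset.prod_le_prod (fun i _ => ((hψP i).pos _).le)
      fun i _ => (hψP i).apply_pow_le (norm_nonneg _) (hP i) n)
    (Finset.prod_nonneg fun i _ => ((hψP i).pos _).le) (hψR.pos _).le

theorem exists_bool_forall_abs_add_le_max (q : ℝ) :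
    ∃ e : Bool, ∀ d ∈ Set.Ico (0 : ℝ) 1, |(if e then -1 else 0) + (q + d)| ≤ max |q| 1 := by
  rcases le_or_gt 0 q with hq | hq
  · refine ⟨true, fun d ⟨hd0, hd1⟩ => ?_⟩
    simp only [if_true]
    grind
  · refine ⟨false, fun d ⟨hd0, hd1⟩ => ?_⟩
    simp only [Bool.false_eq_true, if_false]
    grind

-- The tile at a lattice point `q` contains larger points than `q`; translating it by `-1` in the
-- real coordinates with `q b ≥ 0` repairs this, up to `max · 1`.
theorem exists_approxWeight_le (hψR : IsApproxFunction ψR) (hψP : ∀ i, IsApproxFunction (ψP i))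
    (q : Fin n → sInt (∏ i, p i)) :
    ∃ t : Fin n → Bool, ∀ d ∈ unitCube p (Fin n), approxWeight ψR ψP (diagVec p (Fin n) q)
      ≤ approxWeight ψR ψP
        ((fun b => ((if t b then -1 else 0 : ℝ), 0)) + (diagVec p (Fin n) q + d)) := by
  choose t ht using fun b => exists_bool_forall_abs_add_le_max ((q b : ℚ) : ℝ)
  refine ⟨t, fun d hd => approxWeight_le_approxWeight hψR hψP ?_ fun i => ?_⟩
  · refine (pi_norm_le_iff_of_nonneg (le_max_of_le_right zero_le_one)).2 fun b => ?_
    have hb : |((q b : ℚ) : ℝ)| ≤ ‖realComponent (diagVec p (Fin n) q)‖ :=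
      norm_le_pi_norm (realComponent (diagVec p (Fin n) q)) b
    exact (ht b _ (mem_unitBox.1 (hd b trivial)).1).trans (max_le_max_right 1 hb)
  · refine (pi_norm_le_iff_of_nonneg (le_max_of_le_right zero_le_one)).2 fun b => ?_
    have hb := norm_le_pi_norm (padicComponent i (diagVec p (Fin n) q)) b
    have hdb : ‖(d b).2 i‖ ≤ 1 := (mem_unitBox.1 (hd b trivial)).2 i
    change ‖0 + (padicComponent i (diagVec p (Fin n) q) b + (d b).2 i)‖ ≤ _
    rw [zero_add]
    exact (Padic.nonarchimedean _ _).trans (max_le_max hb hdb)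

theorem tsum_approxWeight_ne_top [∀ i, MeasurableSpace ℚ_[p i]] [∀ i, BorelSpace ℚ_[p i]]
    (hp : Function.Injective p) (hψR : IsApproxFunction ψR) (hψP : ∀ i, IsApproxFunction (ψP i))
    {μ : Measure (Fin n → QS p)} [μ.IsAddHaarMeasure] (hint : ∫⁻ y, approxWeight ψR ψP y ∂μ ≠ ⊤) :
    ∑' q, approxWeight ψR ψP (diagVec p (Fin n) q) ≠ ⊤ := by
  have hpos : μ (unitCube p (Fin n)) ≠ 0 :=
    (Measure.measure_pos_of_nonempty_interior μ interior_unitCube_nonempty).ne'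
  have hle := (isTile_unitCube hp (Fin n)).tsum_mul_measure_le (μ := μ) measurableSet_unitCube _
    (exists_approxWeight_le hψR hψP)
  intro htop
  rw [htop, ENNReal.top_mul hpos, top_le_iff] at hle
  exact ENNReal.mul_ne_top (ENNReal.natCast_ne_top _) hint hle

end Weight

section Solutions

variable {S : Type*} [Fintype S] {p : S → ℕ} [∀ i, Fact (p i).Prime] {m n : ℕ}
  {ψR : ℝ → ℝ} {ψP : S → ℝ → ℝ}

/-- The pairs `(u, q) ∈ ℤ_S^m × ℤ_S^n` with `‖A_p q + u‖_p^m ≤ ψ_p(‖q‖_p^n)` for all places `p`. -/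
def solutions (ψR : ℝ → ℝ) (ψP : S → ℝ → ℝ) (A : Fin m → Fin n → QS p) :
    Set ((Fin m → sInt (∏ i, p i)) × (Fin n → sInt (∏ i, p i))) :=
  {uq | mulVecHom (Fin m) (diagVec p (Fin n) uq.2) A + diagVec p (Fin m) uq.1 ∈
    powBox p m (ψR (‖realComponent (diagVec p (Fin n) uq.2)‖ ^ n))
      fun i => ψP i (‖padicComponent i (diagVec p (Fin n) uq.2)‖ ^ n)}

/-- The embedding of `Mat_{m,n}(ℤ_S)` in `Mat_{m,n}(ℚ_S)`. -/
abbrev diagMat (p : S → ℕ) [∀ i, Fact (p i).Prime] (m n : ℕ) :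
    (Fin m → Fin n → sInt (∏ i, p i)) →+ (Fin m → Fin n → QS p) :=
  (diagVec p (Fin n)).compLeft (Fin m)

theorem mulVecHom_diagVec_diagMat (q : Fin n → sInt (∏ i, p i))
    (C : Fin m → Fin n → sInt (∏ i, p i)) :
    mulVecHom (Fin m) (diagVec p (Fin n) q) (diagMat p m n C)
      = diagVec p (Fin m) (mulVecHom (Fin m) q C) :=
  mulVecHom_map (diagQS p) q C

theorem mem_solutions_add_diagMat {A : Fin m → Fin n → QS p}
    {C : Fin m → Fin n → sInt (∏ i, p i)} {u : Fin m → sInt (∏ i, p i)}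
    {q : Fin n → sInt (∏ i, p i)} :
    (u, q) ∈ solutions ψR ψP (A + diagMat p m n C) ↔
      (mulVecHom (Fin m) q C + u, q) ∈ solutions ψR ψP A := by
  simp only [solutions, Set.mem_ofPred_eq, map_add, mulVecHom_diagVec_diagMat, add_assoc]

theorem finite_solutions_of_add_diagMat {A : Fin m → Fin n → QS p}
    {C : Fin m → Fin n → sInt (∏ i, p i)}
    (h : (solutions ψR ψP (A + diagMat p m n C)).Finite) : (solutions ψR ψP A).Finite := by
  refine (h.image fun uq => (mulVecHom (Fin m) uq.2 C + uq.1, uq.2)).subset ?_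
  rintro ⟨u, q⟩ huq
  refine ⟨(u - mulVecHom (Fin m) q C, q), ?_, by simp⟩
  simpa [mem_solutions_add_diagMat] using huq

theorem finite_setOf_diagVec_mem_powBox_one (hm : m ≠ 0) :
    {u | diagVec p (Fin m) u ∈ powBox p m 1 fun _ => 1}.Finite := by
  have hcoord : {z : sInt (∏ i, p i) | |((z : ℚ) : ℝ)| ≤ 1 ∧
      ∀ i, ‖((z : ℚ) : ℚ_[p i])‖ ≤ 1}.Finite := by
    refine .of_finite_image (f := Subtype.val) ?_ Subtype.val_injective.injOn
    refine ((Set.finite_Icc (-1 : ℤ) 1).image Int.cast).subset ?_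
    rintro _ ⟨z, ⟨hR, hP⟩, rfl⟩
    obtain ⟨k, hk⟩ := IsZS.exists_eq_intCast z.2 hP
    rw [hk] at hR ⊢
    exact ⟨k, abs_le.1 (by exact_mod_cast hR), rfl⟩
  refine (Set.Finite.pi' fun _ => hcoord).subset fun u hu a => ?_
  have hbox := powBox_pow (p := p) hm zero_le_one (r := fun _ => 1) fun _ => zero_le_one
  simp only [one_pow] at hbox
  rw [Set.mem_ofPred_eq, hbox] at hu
  have hua := hu a trivial
  simp only [Set.mem_prod, Set.mem_univ_pi, mem_closedBall_zero_iff] at hua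
  exact hua

theorem finite_solutions_zero (hm : m ≠ 0) (hψR : IsApproxFunction ψR)
    (hψP : ∀ i, IsApproxFunction (ψP i)) (A : Fin m → Fin n → QS p) :
    (solutions ψR ψP A ∩ {uq | uq.2 = 0}).Finite := by
  refine ((finite_setOf_diagVec_mem_powBox_one hm).image fun u => (u, 0)).subset ?_
  rintro ⟨u, q⟩ ⟨huq, rfl : q = 0⟩
  refine ⟨u, ?_, rfl⟩
  have hpow : (0 : ℝ) ^ n ≤ 1 := pow_le_one₀ le_rfl zero_le_one
  have hR : realComponent (0 : Fin n → QS p) = 0 := rfl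
  have hP : ∀ i, padicComponent i (0 : Fin n → QS p) = 0 := fun _ => rfl
  have hA : mulVecHom (Fin m) (0 : Fin n → QS p) A = 0 := funext fun a => dotProduct_zero (A a)
  simpa only [solutions, Set.mem_ofPred_eq, map_zero, hR, hP, norm_zero, hA, zero_add,
    hψR.eq_one _ hpow, (hψP _).eq_one _ hpow] using huq

theorem isTile_unitMatCube (hp : Function.Injective p) :
    IsTile (diagMat p m n) (unitMatCube p m n) := (isTile_unitCube hp _).pi _

variable [∀ i, MeasurableSpace ℚ_[p i]] [∀ i, BorelSpace ℚ_[p i]]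
  {κ : Measure (Fin m → Fin n → QS p)} [κ.IsAddHaarMeasure]

theorem tsum_measure_solutions_mul_eq (hp : Function.Injective p) {q : Fin n → sInt (∏ i, p i)}
    (hq : q ≠ 0) (ξ : Measure (Fin m → QS p)) [ξ.IsAddHaarMeasure] :
    (∑' u, κ (unitMatCube p m n ∩ {A | (u, q) ∈ solutions ψR ψP A})) * ξ (unitCube p (Fin m))
      = κ (unitMatCube p m n) * ξ (powBox p m (ψR (‖realComponent (diagVec p (Fin n) q)‖ ^ n))
          fun i => ψP i (‖padicComponent i (diagVec p (Fin n) q)‖ ^ n)) := by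
  obtain ⟨c, hc⟩ := Function.ne_iff.1 hq
  have hsurj : Function.Surjective (mulVecHom (Fin m) (diagVec p (Fin n) q)) :=
    mulVecHom_surjective (c := c) (isUnit_diagQS hc)
  have hlattice : ∀ C, mulVecHom (Fin m) (diagVec p (Fin n) q) (diagMat p m n C) ∈
      (diagVec p (Fin m)).range := fun C => ⟨_, (mulVecHom_diagVec_diagMat q C).symm⟩
  simp only [solutions, Set.mem_ofPred_eq]
  exact (isTile_unitCube hp (Fin m)).tsum_measure_mul_eq measurableSet_unitCube
    interior_unitCube_nonempty (isTile_unitMatCube hp) measurableSet_unitMatCube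
    (measure_unitMatCube_ne_top κ) (continuous_mulVecHom _).measurable hsurj hlattice
    (measurableSet_powBox ..)

variable (κ) in
theorem exists_forall_tsum_measure_solutions_le (hp : Function.Injective p) (hm : m ≠ 0)
    (hψR : IsApproxFunction ψR) (hψP : ∀ i, IsApproxFunction (ψP i)) :
    ∃ C : ENNReal, C ≠ ⊤ ∧ ∀ q : Fin n → sInt (∏ i, p i), q ≠ 0 →
      ∑' u, κ (unitMatCube p m n ∩ {A | (u, q) ∈ solutions ψR ψP A})
        ≤ C * approxWeight ψR ψP (diagVec p (Fin n) q) := by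
  let η : ∀ i, Measure ℚ_[p i] := fun _ => Measure.addHaar
  let ξ : Measure (Fin m → QS p) := .pi fun _ => (volume : Measure ℝ).prod (.pi η)
  have hη : ((volume : Measure ℝ).prod (.pi η)).IsAddHaarMeasure := inferInstance
  have hξ : ξ.IsAddHaarMeasure := Measure.pi.isAddHaarMeasure _
  have hpos : ξ (unitCube p (Fin m)) ≠ 0 :=
    (Measure.measure_pos_of_nonempty_interior ξ interior_unitCube_nonempty).ne'
  have hfin : ξ (unitCube p (Fin m)) ≠ ⊤ := isBounded_unitCube.measure_lt_top.ne
  refine ⟨κ (unitMatCube p m n) * (2 * ∏ i, η i (Metric.closedBall 0 1)) ^ m /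
    ξ (unitCube p (Fin m)), ?_, fun q hq => ?_⟩
  · refine ENNReal.div_ne_top (ENNReal.mul_ne_top (measure_unitMatCube_ne_top κ) ?_) hpos
    exact ENNReal.pow_ne_top <| ENNReal.mul_ne_top ENNReal.ofNat_ne_top <|
      ENNReal.prod_ne_top fun i _ => Metric.isBounded_closedBall.measure_lt_top.ne
  · rw [← ENNReal.mul_div_right_comm, ENNReal.le_div_iff_mul_le (.inl hpos) (.inl hfin),
      tsum_measure_solutions_mul_eq hp hq, mul_assoc]
    gcongr
    exact measure_powBox_le η hm (hψR.pos _).le (fun i => (hψP i).pos _) fun i => (hψP i).le_one _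

theorem tsum_measure_solutions_ne_top (hp : Function.Injective p) (hm : m ≠ 0)
    (hψR : IsApproxFunction ψR) (hψP : ∀ i, IsApproxFunction (ψP i))
    (hsum : ∑' q, approxWeight ψR ψP (diagVec p (Fin n) q) ≠ ⊤) :
    ∑' uq : (Fin m → sInt (∏ i, p i)) × {q : Fin n → sInt (∏ i, p i) // q ≠ 0},
      κ (unitMatCube p m n ∩ {A | (uq.1, uq.2.1) ∈ solutions ψR ψP A}) ≠ ⊤ := by
  obtain ⟨C, hC, hCle⟩ := exists_forall_tsum_measure_solutions_le κ hp hm hψR hψP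
  refine ne_top_of_le_ne_top (ENNReal.mul_ne_top hC hsum) ?_
  rw [ENNReal.tsum_prod', ENNReal.tsum_comm, ← ENNReal.tsum_mul_left]
  refine (ENNReal.tsum_le_tsum fun q => ?_).trans
    (ENNReal.tsum_comp_le_tsum_of_injective Subtype.val_injective _)
  exact hCle q.1 q.2

theorem ae_finite_solutions (hp : Function.Injective p) (hm : m ≠ 0)
    (hψR : IsApproxFunction ψR) (hψP : ∀ i, IsApproxFunction (ψP i))
    {μ : Measure (Fin n → QS p)} [μ.IsAddHaarMeasure]
    (hint : ∫⁻ y, approxWeight ψR ψP y ∂μ ≠ ⊤) :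
    ∀ᵐ A ∂κ, (solutions ψR ψP A).Finite := by
  refine (isTile_unitMatCube hp).ae_of_forall_periodic measurableSet_unitMatCube
    (fun A C => finite_solutions_of_add_diagMat) ?_
  have hsum := tsum_measure_solutions_ne_top (κ := κ) hp hm hψR hψP
    (tsum_approxWeight_ne_top hp hψR hψP hint)
  simp only [Set.inter_comm (unitMatCube p m n),
    ← Measure.restrict_apply' measurableSet_unitMatCube] at hsum
  filter_upwards [ae_finite_setOfPred_mem hsum] with A hA
  refine ((finite_solutions_zero hm hψR hψP A).union
    (hA.image fun uq => (uq.1, uq.2.1))).subset fun uq huq => ?_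
  by_cases hq : uq.2 = 0
  · exact .inl ⟨huq, hq⟩
  · exact .inr ⟨(uq.1, ⟨uq.2, hq⟩), huq, rfl⟩

end Solutions

section Transport

/-- The regrouping `(ι → R) × ∏ᵢ (ι → K i) ≃ (ι → R × ∏ᵢ K i)`: a family of vectors, one for each
place, becomes a vector of families. -/
def zipEquiv (ι R : Type*) {S : Type*} (K : S → Type*) [AddCommGroup R] [TopologicalSpace R]
    [∀ i, AddCommGroup (K i)] [∀ i, TopologicalSpace (K i)] :
    ((ι → R) × ∀ i, ι → K i) ≃ₜ+ (ι → R × ∀ i, K i) where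
  toFun x a := (x.1 a, fun i => x.2 i a)
  invFun y := (fun a => (y a).1, fun i a => (y a).2 i)
  map_add' _ _ := rfl
  continuous_toFun := by fun_prop
  continuous_invFun := by fun_prop

/-- The identification of `∏ₚ Mat_{m,n}(ℚ_p)` with `Mat_{m,n}(∏ₚ ℚ_p)`. -/
def zipMatEquiv (ι κ R : Type*) {S : Type*} (K : S → Type*) [AddCommGroup R] [TopologicalSpace R]
    [∀ i, AddCommGroup (K i)] [∀ i, TopologicalSpace (K i)] :
    ((ι → κ → R) × ∀ i, ι → κ → K i) ≃ₜ+ (ι → κ → R × ∀ i, K i) where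
  toFun x a b := (x.1 a b, fun i => x.2 i a b)
  invFun y := (fun a b => (y a b).1, fun i a b => (y a b).2 i)
  map_add' _ _ := rfl
  continuous_toFun := by fun_prop
  continuous_invFun := by fun_prop

variable {S : Type*} [Fintype S] {p : S → ℕ} [∀ i, Fact (p i).Prime] {m n : ℕ}
  {ψR : ℝ → ℝ} {ψP : S → ℝ → ℝ}

theorem mem_solutions_zipMatEquiv {A : (Fin m → Fin n → ℝ) × ∀ i, Fin m → Fin n → ℚ_[p i]}
    {u : Fin m → sInt (∏ i, p i)} {q : Fin n → sInt (∏ i, p i)} :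
    (u, q) ∈ solutions ψR ψP (zipMatEquiv (Fin m) (Fin n) ℝ (fun i => ℚ_[p i]) A) ↔
      ‖fun a => (∑ b, A.1 a b * ((q b : ℚ) : ℝ)) + ((u a : ℚ) : ℝ)‖ ^ m
        ≤ ψR (‖fun b => ((q b : ℚ) : ℝ)‖ ^ n) ∧
      ∀ i, ‖fun a => (∑ b, A.2 i a b * ((q b : ℚ) : ℚ_[p i])) + ((u a : ℚ) : ℚ_[p i])‖ ^ m
        ≤ ψP i (‖fun b => ((q b : ℚ) : ℚ_[p i])‖ ^ n) := by
  set B := zipMatEquiv (Fin m) (Fin n) ℝ (fun i => ℚ_[p i]) A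
  set x := mulVecHom (Fin m) (diagVec p (Fin n) q) B + diagVec p (Fin m) u with hx
  have hR : realComponent x = fun a => (∑ b, A.1 a b * ((q b : ℚ) : ℝ)) + ((u a : ℚ) : ℝ) :=
    funext fun a => congrArg (· + ((u a : ℚ) : ℝ)) <|
      RingHom.map_dotProduct (RingHom.fst ℝ _) (B a) (diagVec p (Fin n) q)
  have hP : ∀ i, padicComponent i x =
      fun a => (∑ b, A.2 i a b * ((q b : ℚ) : ℚ_[p i])) + ((u a : ℚ) : ℚ_[p i]) :=
    fun i => funext fun a => congrArg (· + ((u a : ℚ) : ℚ_[p i])) <|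
      RingHom.map_dotProduct ((Pi.evalRingHom _ i).comp (RingHom.snd ℝ _)) (B a)
        (diagVec p (Fin n) q)
  simp only [solutions, powBox, Set.mem_ofPred_eq, ← hx, hR, hP]
  rfl

end Transport

section HaarProducts

variable {S : Type*} [Fintype S] {p : S → ℕ} [∀ i, Fact (p i).Prime]
  [∀ i, MeasurableSpace ℚ_[p i]] [∀ i, BorelSpace ℚ_[p i]] {ι κ : Type*} [Fintype ι] [Fintype κ]

instance isAddHaarMeasure_volume_prod_pi_vec (μ : ∀ i, Measure (ι → ℚ_[p i]))
    [∀ i, (μ i).IsAddHaarMeasure] :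
    ((volume : Measure (ι → ℝ)).prod (Measure.pi μ)).IsAddHaarMeasure :=
  have := Measure.pi.isAddHaarMeasure μ
  Measure.prod.instIsAddHaarMeasure _ _

instance isAddHaarMeasure_volume_prod_pi_mat (ν : ∀ i, Measure (ι → κ → ℚ_[p i]))
    [∀ i, (ν i).IsAddHaarMeasure] :
    ((volume : Measure (ι → κ → ℝ)).prod (Measure.pi ν)).IsAddHaarMeasure :=
  have : (volume : Measure (ι → κ → ℝ)).IsAddHaarMeasure := Measure.pi.isAddHaarMeasure _
  have := Measure.pi.isAddHaarMeasure ν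
  Measure.prod.instIsAddHaarMeasure _ _

end HaarProducts

theorem s_arithmetic_khintchine_groshev_convergence_general {S : Type*} [Fintype S] {p : S → ℕ}
    [∀ i, Fact (p i).Prime] (hp : Function.Injective p) [∀ i, MeasurableSpace ℚ_[p i]]
    [∀ i, BorelSpace ℚ_[p i]] {m n : ℕ} (hm : m ≠ 0) {ψR : ℝ → ℝ} {ψP : S → ℝ → ℝ}
    (hψR : IsApproxFunction ψR) (hψP : ∀ i, IsApproxFunction (ψP i))
    {μ : Measure ((Fin n → ℝ) × ∀ i, Fin n → ℚ_[p i])} [μ.IsAddHaarMeasure]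
    {ν : Measure ((Fin m → Fin n → ℝ) × ∀ i, Fin m → Fin n → ℚ_[p i])} [ν.IsAddHaarMeasure]
    (hint : ∫⁻ y, ENNReal.ofReal (ψR (‖y.1‖ ^ n) * ∏ i, ψP i (‖y.2 i‖ ^ n)) ∂μ < ⊤) :
    ∀ᵐ A ∂ν, {pq : (Fin m → ℚ) × (Fin n → ℚ) |
      (∀ a, IsZS (∏ i, p i) (pq.1 a)) ∧ (∀ b, IsZS (∏ i, p i) (pq.2 b)) ∧
      ‖fun a => (∑ b, A.1 a b * (pq.2 b : ℝ)) + (pq.1 a : ℝ)‖ ^ m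
        ≤ ψR (‖fun b => (pq.2 b : ℝ)‖ ^ n) ∧
      ∀ i, ‖fun a => (∑ b, A.2 i a b * (pq.2 b : ℚ_[p i])) + (pq.1 a : ℚ_[p i])‖ ^ m
        ≤ ψP i (‖fun b => (pq.2 b : ℚ_[p i])‖ ^ n)}.Finite := by
  let e := zipEquiv (Fin n) ℝ fun i => ℚ_[p i]
  let f := zipMatEquiv (Fin m) (Fin n) ℝ fun i => ℚ_[p i]
  have hμ : (μ.map e).IsAddHaarMeasure := e.isAddHaarMeasure_map μ
  have hν : (ν.map f).IsAddHaarMeasure := f.isAddHaarMeasure_map ν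
  have hint' : ∫⁻ y, approxWeight ψR ψP y ∂μ.map e ≠ ⊤ :=
    ((lintegral_map_le _ e).trans_lt hint).ne
  filter_upwards [ae_of_ae_map f.continuous.aemeasurable
    (ae_finite_solutions hp hm hψR hψP hint')] with A hA
  refine (hA.image fun uq => (fun a => (uq.1 a : ℚ), fun b => (uq.2 b : ℚ))).subset ?_
  rintro ⟨u, q⟩ ⟨hu, hq, huq⟩
  exact ⟨(fun a => ⟨u a, hu a⟩, fun b => ⟨q b, hq b⟩), mem_solutions_zipMatEquiv.2 huq, rfl⟩

end

/-- **Convergence case of the S-arithmetic Khintchine–Groshev theorem with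
congruence conditions.** Assume `d = m + n ≥ 2`. If
`∫_{ℚ_S^n} ∏_{p ∈ S} ψ_p(‖y‖_p^n) dy < ∞`, then for Haar-almost every
`A ∈ Mat_{m,n}(ℚ_S)` there are only finitely many `(p⃗, q⃗) ∈ ℤ_S^m × ℤ_S^n` with
`(p⃗, q⃗) ≡ (v_m, v_n) mod N` and `‖A_p q⃗ + p⃗‖_p^m ≤ ψ_p(‖q⃗‖_p^n)` for all `p ∈ S`. -/
theorem s_arithmetic_khintchine_groshev_convergence
    (m n : ℕ) (hm : 0 < m) (hn : 0 < n) (hd : 2 ≤ m + n)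
    (s : ℕ) (p : Fin s → ℕ) [∀ i, Fact (p i).Prime] (hpinj : Function.Injective p)
    [∀ i, MeasurableSpace ℚ_[p i]] [∀ i, BorelSpace ℚ_[p i]]
    (ψ : ApproxFamily m n s p)
    (N : ℕ) (hN : 0 < N) (hNS : Nat.Coprime N (∏ i, p i))
    (vm : Fin m → ℚ) (hvm : ∀ a, IsZS (∏ i, p i) (vm a))
    (vn : Fin n → ℚ) (hvn : ∀ b, IsZS (∏ i, p i) (vn b))
    -- Haar measure on `ℚ_S^n`, normalized so that `ℤ_p^n` has measure one at each
    -- finite place: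
    (μ : ∀ i, Measure (Fin n → ℚ_[p i])) [∀ i, (μ i).IsAddHaarMeasure]
    (hμ : ∀ i, μ i {y | ∀ j, ‖y j‖ ≤ 1} = 1)
    -- Haar measure on `Mat_{m,n}(ℚ_S)`, normalized likewise:
    (ν : ∀ i, Measure (Fin m → Fin n → ℚ_[p i])) [∀ i, (ν i).IsAddHaarMeasure]
    (hν : ∀ i, ν i {A | ∀ a b, ‖A a b‖ ≤ 1} = 1)
    -- convergence of the integral `∫_{ℚ_S^n} ∏_{p ∈ S} ψ_p(‖y‖_p^n) dy`:
    (hint : ∫⁻ y : (Fin n → ℝ) × (∀ i, Fin n → ℚ_[p i]),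
        ENNReal.ofReal (ψ.psiR (‖y.1‖ ^ n) * ∏ i, ψ.psiP i (‖y.2 i‖ ^ n))
        ∂((volume : Measure (Fin n → ℝ)).prod (Measure.pi μ)) < ⊤) :
    ∀ᵐ A ∂((volume : Measure (Fin m → Fin n → ℝ)).prod (Measure.pi ν)),
      {pq : (Fin m → ℚ) × (Fin n → ℚ) |
        (∀ a, IsZS (∏ i, p i) (pq.1 a)) ∧ (∀ b, IsZS (∏ i, p i) (pq.2 b)) ∧
        (∀ a, IsZS (∏ i, p i) ((pq.1 a - vm a) / N)) ∧
        (∀ b, IsZS (∏ i, p i) ((pq.2 b - vn b) / N)) ∧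
        ‖fun a => (∑ b, A.1 a b * (pq.2 b : ℝ)) + (pq.1 a : ℝ)‖ ^ m
          ≤ ψ.psiR (‖ratR pq.2‖ ^ n) ∧
        ∀ i, ‖fun a => (∑ b, A.2 i a b * ((pq.2 b : ℚ) : ℚ_[p i])) + ((pq.1 a : ℚ) : ℚ_[p i])‖ ^ m
          ≤ ψ.psiP i (‖ratP p i pq.2‖ ^ n)}.Finite := by
  filter_upwards [s_arithmetic_khintchine_groshev_convergence_general hpinj hm.ne'
    ψ.isApproxFunction_psiR ψ.isApproxFunction_psiP hint] with A hA
  exact hA.subset fun _ ⟨hp, hq, _, _, h⟩ => ⟨hp, hq, h⟩
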